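/- Exponential spatial decay (Theorem 'Milne theorem 2'): There exist ε₀ ∈ (0,1), K₀ ∈ (0, K] and C > 0, depending only on R₁, R₂, n, K and M, such that for every ε ∈ (0, ε₀] and every classical solution f of the ε-Milne problem with geometric correction whose data h, S satisfy the data bounds, one has ‖e^{K₀η}(f − f_L)‖_{L²} + ‖e^{K₀η}(f − f_L)‖_{L∞} ≤ C. -/

import Mathlib

noncomputable section

open Real Set MeasureTheory

namespace MilneStmt

/-- The boundary-layer thickness `L = ε^(-n)`. -/
def layerL (ε n : ℝ) : ℝ := ε ^ (-n)

/-- The geometric force `F(η,ψ)`. -/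
def force (R₁ R₂ ε η ψ : ℝ) : ℝ :=
  -ε * (Real.sin ψ ^ 2 / (R₁ - ε * η) + Real.cos ψ ^ 2 / (R₂ - ε * η))

/-- The domain `D = [0,L] × [-π/2, π/2] × [-π, π]` of the variables `(η, φ, ψ)`. -/
def milneDomain (L : ℝ) : Set (ℝ × ℝ × ℝ) :=
  Icc (0 : ℝ) L ×ˢ Icc (-(π / 2)) (π / 2) ×ˢ Icc (-π) π

/-- The in-flow set `{(φ,ψ) : sin φ > 0, ψ ∈ [-π,π]}` (with `φ` in the velocity range). -/
def inflowSet : Set (ℝ × ℝ) :=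
  {q | 0 < Real.sin q.1 ∧ q.1 ∈ Icc (-(π / 2)) (π / 2) ∧ q.2 ∈ Icc (-π) π}

/-- The angular average `f̄(η)`. -/
def angAvg (f : ℝ × ℝ × ℝ → ℝ) (η : ℝ) : ℝ :=
  (1 / (4 * π)) * ∫ ψ in (-π)..π, ∫ φ in (-(π / 2))..(π / 2), f (η, φ, ψ) * Real.cos φ

/-- Partial derivative in `η`. -/
def dEta (g : ℝ × ℝ × ℝ → ℝ) (p : ℝ × ℝ × ℝ) : ℝ :=
  deriv (fun t => g (t, p.2.1, p.2.2)) p.1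

/-- Partial derivative in `φ`. -/
def dPhi (g : ℝ × ℝ × ℝ → ℝ) (p : ℝ × ℝ × ℝ) : ℝ :=
  deriv (fun t => g (p.1, t, p.2.2)) p.2.1

/-- Partial derivative in `ψ`. -/
def dPsi (g : ℝ × ℝ × ℝ → ℝ) (p : ℝ × ℝ × ℝ) : ℝ :=
  deriv (fun t => g (p.1, p.2.1, t)) p.2.2

/-- A classical solution of the ε-Milne problem with geometric correction,
with in-flow data `h` and source `S`. -/
structure IsMilneSolution (R₁ R₂ ε n : ℝ) (h : ℝ → ℝ → ℝ) (S : ℝ × ℝ × ℝ → ℝ)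
    (f : ℝ × ℝ × ℝ → ℝ) : Prop where
  smooth : ContDiffOn ℝ 1 f (milneDomain (layerL ε n))
  eqn : ∀ p ∈ interior (milneDomain (layerL ε n)),
    Real.sin p.2.1 * dEta f p + force R₁ R₂ ε p.1 p.2.2 * Real.cos p.2.1 * dPhi f p
      + f p - angAvg f p.1 = S p
  inflow : ∀ q ∈ inflowSet, f (0, q.1, q.2) = h q.1 q.2
  reflect : ∀ φ ψ : ℝ, f (layerL ε n, φ, ψ) = f (layerL ε n, -φ, ψ)

/-- The weighted `L²` norm on `D`. -/
def l2Norm (L : ℝ) (g : ℝ × ℝ × ℝ → ℝ) : ℝ :=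
  Real.sqrt (∫ η in (0 : ℝ)..L, ∫ ψ in (-π)..π, ∫ φ in (-(π / 2))..(π / 2),
    g (η, φ, ψ) ^ 2 * Real.cos φ)

/-- The `L^∞` norm (sup over `D`). -/
def linfNorm (L : ℝ) (g : ℝ × ℝ × ℝ → ℝ) : ℝ :=
  ⨆ p ∈ milneDomain L, |g p|

/-- The `L^∞` norm over the in-flow boundary. -/
def inflowLinf (g : ℝ → ℝ → ℝ) : ℝ :=
  ⨆ q ∈ inflowSet, |g q.1 q.2|

/-- The limit value `f_L = (3/(4π)) ∫∫ f(L,φ,ψ) sin²φ cos φ dφ dψ`. -/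
def limitValue (L : ℝ) (f : ℝ × ℝ × ℝ → ℝ) : ℝ :=
  (3 / (4 * π)) * ∫ ψ in (-π)..π, ∫ φ in (-(π / 2))..(π / 2),
    f (L, φ, ψ) * Real.sin φ ^ 2 * Real.cos φ

/-- The data bounds with constants `K` and `M` for in-flow data `h` and source `S`. -/
structure DataBounds (K M L : ℝ) (h : ℝ → ℝ → ℝ) (S : ℝ × ℝ × ℝ → ℝ) : Prop where
  hSmooth : ContDiffOn ℝ 1 (fun q : ℝ × ℝ => h q.1 q.2) inflowSet
  hBound : ∀ q ∈ inflowSet,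
    |h q.1 q.2| + |deriv (fun t => h t q.2) q.1| + |deriv (fun t => h q.1 t) q.2| ≤ M
  sSmooth : ContDiffOn ℝ 1 S (milneDomain L)
  sBound : ∀ p ∈ milneDomain L,
    Real.exp (K * p.1) * (|S p| + |dEta S p| + |dPhi S p| + |dPsi S p|) ≤ M

open Filter Topology

/-! Let `g = f - f_L`. Integrating the equation over the sphere from `η = L`, where reflection kills
the flux and the choice of `f_L` kills the second moment, and then doing the same with the weight
`sin φ`, shows that `∫ sin² φ g` is controlled by the source up to a small multiple (the size of the
force) of `g` itself. Since `1 = cos² φ + sin² φ` and `cos² φ` has average `2 / 3`, the average of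
`g` is at most `2 / 3` of its supremum, up to small terms, so the collision term is a contraction
even in the norm weighted by `e^{bη}` with `b` small. The maximum principle then bounds `g` by the
source and the in-flow data `h - f_L`.

It remains to bound the constant `f_L` in these data. Comparison with a barrier whose slope in
`sin φ` is positive at `η = 0` shows that if `|f_L|` were large, `g` would be strictly closer to `0`
on the outgoing velocities than on the incoming ones. The second moment of `g` at `η = 0` would then
be too large. -/

theorem abs_sub_le_sub_of_abs_deriv_le {u v u' v' : ℝ → ℝ} {a b : ℝ} (hab : a ≤ b)
    (hu : ContinuousOn u (Icc a b)) (hv : ContinuousOn v (Icc a b))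
    (hu' : ∀ x ∈ Ioo a b, HasDerivAt u (u' x) x) (hv' : ∀ x ∈ Ioo a b, HasDerivAt v (v' x) x)
    (h : ∀ x ∈ Ioo a b, |u' x| ≤ v' x) : |u b - u a| ≤ v b - v a := by
  rw [← interior_Icc] at hu' hv' h
  have hadd : MonotoneOn (v + u) (Icc a b) :=
    monotoneOn_of_hasDerivWithinAt_nonneg (convex_Icc a b) (hv.add hu)
      (fun x hx => ((hv' x hx).add (hu' x hx)).hasDerivWithinAt)
      fun x hx => neg_le_iff_add_nonneg'.1 (neg_le_of_abs_le (h x hx))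
  have hsub : MonotoneOn (v - u) (Icc a b) :=
    monotoneOn_of_hasDerivWithinAt_nonneg (convex_Icc a b) (hv.sub hu)
      (fun x hx => ((hv' x hx).sub (hu' x hx)).hasDerivWithinAt)
      fun x hx => sub_nonneg.2 (le_of_abs_le (h x hx))
  have h₁ := hadd (left_mem_Icc.2 hab) (right_mem_Icc.2 hab) hab
  have h₂ := hsub (left_mem_Icc.2 hab) (right_mem_Icc.2 hab) hab
  simp only [Pi.add_apply, Pi.sub_apply] at h₁ h₂
  exact abs_sub_le_iff.2 ⟨by linarith, by linarith⟩

theorem abs_le_exp_of_abs_deriv_le_exp {u u' : ℝ → ℝ} {L b c : ℝ} (hb : 0 < b) (hc : 0 ≤ c)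
    (hu : ContinuousOn u (Icc 0 L)) (hu' : ∀ x ∈ Ioo 0 L, HasDerivAt u (u' x) x)
    (h : ∀ x ∈ Ioo 0 L, |u' x| ≤ c * exp (-(b * x))) (huL : u L = 0) {x : ℝ}
    (hx : x ∈ Icc 0 L) : |u x| ≤ c / b * exp (-(b * x)) := by
  have hprim (y : ℝ) :
      HasDerivAt (fun t => -(c / b * exp (-(b * t)))) (c * exp (-(b * y))) y := by
    have := (((hasDerivAt_id y).const_mul b).neg.exp.const_mul (c / b)).neg
    exact this.congr_deriv (by simp; field_simp)
  have hsub : Ioo x L ⊆ Ioo 0 L := Ioo_subset_Ioo_left hx.1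
  have key := abs_sub_le_sub_of_abs_deriv_le hx.2 (hu.mono (Icc_subset_Icc_left hx.1))
    (fun y _ => (hprim y).continuousAt.continuousWithinAt)
    (fun y hy => hu' y (hsub hy)) (fun y _ => hprim y) (fun y hy => h y (hsub hy))
  rw [huL, zero_sub, abs_neg] at key
  have : 0 ≤ c / b * exp (-(b * L)) := by positivity
  linarith

theorem eventually_add_mul_mem_Icc {a b x d : ℝ} (hab : a < b) (hx : x ∈ Icc a b)
    (ha : x = a → 0 ≤ d) (hb : x = b → d ≤ 0) : ∀ᶠ t in 𝓝[>] (0 : ℝ), x + t * d ∈ Icc a b := by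
  have hpos : ∀ᶠ t in 𝓝[>] (0 : ℝ), 0 < t := self_mem_nhdsWithin
  have hlim : Tendsto (fun t : ℝ => x + t * d) (𝓝[>] 0) (𝓝 x) := by
    have : Continuous fun t : ℝ => x + t * d := by fun_prop
    simpa using (this.tendsto 0).mono_left nhdsWithin_le_nhds
  have hleft : ∀ᶠ t in 𝓝[>] (0 : ℝ), a ≤ x + t * d := by
    rcases hx.1.eq_or_lt with rfl | h
    · filter_upwards [hpos] with t ht
      nlinarith [ha rfl]
    · exact (hlim.eventually (lt_mem_nhds h)).mono fun _ => le_of_lt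
  have hright : ∀ᶠ t in 𝓝[>] (0 : ℝ), x + t * d ≤ b := by
    rcases hx.2.eq_or_lt with rfl | h
    · filter_upwards [hpos] with t ht
      nlinarith [hb rfl]
    · exact (hlim.eventually (gt_mem_nhds h)).mono fun _ => le_of_lt
  exact hleft.and hright

section ParametricIntegral

variable {X : Type*} [TopologicalSpace X] [T2Space X] [MeasurableSpace X] [BorelSpace X]
  {μ : Measure X} [IsFiniteMeasure μ] {K : Set X}

theorem integrable_of_continuousOn_of_ae_mem (hK : IsCompact K) (hμ : ∀ᵐ x ∂μ, x ∈ K)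
    {u : X → ℝ} (hu : ContinuousOn u K) : Integrable u μ := by
  rw [← Measure.restrict_eq_self_of_ae_mem hμ]
  exact hu.integrableOn_compact hK

variable {s : Set ℝ} {u u' : ℝ × X → ℝ}

theorem continuousOn_integral_of_continuousOn_prod (hs : IsCompact s) (hK : IsCompact K)
    (hμ : ∀ᵐ x ∂μ, x ∈ K) (hu : ContinuousOn u (s ×ˢ K)) :
    ContinuousOn (fun t => ∫ x, u (t, x) ∂μ) s := by
  obtain ⟨C, hC⟩ := (hs.prod hK).exists_bound_of_continuousOn hu
  refine continuousOn_of_dominated (bound := fun _ => C)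
    (fun t ht => (integrable_of_continuousOn_of_ae_mem hK hμ
      (hu.uncurry_left (f := fun r x => u (r, x)) t ht)).aestronglyMeasurable)
    (fun t ht => hμ.mono fun x hx => hC (t, x) ⟨ht, hx⟩) (integrable_const C) ?_
  exact hμ.mono fun x hx => hu.uncurry_right (f := fun r x => u (r, x)) x hx

theorem hasDerivAt_integral_of_continuousOn_prod (hs : IsCompact s) (hK : IsCompact K)
    (hμ : ∀ᵐ x ∂μ, x ∈ K) (hu : ContinuousOn u (s ×ˢ K)) (hu' : ContinuousOn u' (s ×ˢ K))
    (hderiv : ∀ t ∈ interior s, ∀ x ∈ K, HasDerivAt (fun r => u (r, x)) (u' (t, x)) t)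
    {t : ℝ} (ht : t ∈ interior s) :
    HasDerivAt (fun r => ∫ x, u (r, x) ∂μ) (∫ x, u' (t, x) ∂μ) t := by
  obtain ⟨C, hC⟩ := (hs.prod hK).exists_bound_of_continuousOn hu'
  have hint {v : ℝ × X → ℝ} (hv : ContinuousOn v (s ×ˢ K)) {r : ℝ} (hr : r ∈ s) :
      Integrable (fun x => v (r, x)) μ :=
    integrable_of_continuousOn_of_ae_mem hK hμ (hv.uncurry_left (f := fun r x => v (r, x)) r hr)
  have hsub : interior s ⊆ s := interior_subset
  have hnhds : interior s ∈ 𝓝 t := isOpen_interior.mem_nhds ht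
  refine (hasDerivAt_integral_of_dominated_loc_of_deriv_le (bound := fun _ => C)
    (F' := fun r x => u' (r, x)) hnhds
    (eventually_of_mem hnhds fun r hr => (hint hu (hsub hr)).aestronglyMeasurable)
    (hint hu (hsub ht)) (hint hu' (hsub ht)).aestronglyMeasurable ?_ (integrable_const C) ?_).2
  · exact hμ.mono fun x hx r hr => hC (r, x) ⟨hsub hr, hx⟩
  · exact hμ.mono fun x hx r hr => hderiv r hr x hx

end ParametricIntegral

theorem intervalIntegral_comp_abs {g : ℝ → ℝ} {a : ℝ} (ha : 0 ≤ a) (hg : Continuous g) :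
    ∫ x in -a..a, g |x| = 2 * ∫ x in 0..a, g x := by
  have hint (c d : ℝ) : IntervalIntegrable (fun x => g |x|) volume c d :=
    (hg.comp continuous_abs).intervalIntegrable c d
  have hright : ∫ x in 0..a, g |x| = ∫ x in 0..a, g x :=
    intervalIntegral.integral_congr fun x hx => by
      rw [uIcc_of_le ha] at hx
      simp only [abs_of_nonneg hx.1]
  have hleft : ∫ x in -a..0, g |x| = ∫ x in 0..a, g |x| := by
    simpa using (intervalIntegral.integral_comp_neg (fun x => g |x|) (a := 0) (b := a)).symm
  rw [← intervalIntegral.integral_add_adjacent_intervals (hint _ 0) (hint 0 _), hleft, hright,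
    two_mul]

/-! ### Angular averages -/

/-- The range of the velocity variables `(φ, ψ)`. -/
def velocityBox : Set (ℝ × ℝ) := Icc (-(π / 2)) (π / 2) ×ˢ Icc (-π) π

/-- The normalized surface measure of the unit sphere, in latitude `φ` and longitude `ψ`. The
average of the problem is the integral against it. -/
def angularMeasure : Measure (ℝ × ℝ) :=
  (volume.restrict velocityBox).withDensity fun q => ENNReal.ofReal (cos q.1 / (4 * π))

theorem isCompact_velocityBox : IsCompact velocityBox := isCompact_Icc.prod isCompact_Icc

theorem neg_mem_velocityBox {q : ℝ × ℝ} (hq : q ∈ velocityBox) : (-q.1, q.2) ∈ velocityBox :=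
  ⟨⟨neg_le_neg hq.1.2, by linarith [hq.1.1]⟩, hq.2⟩

theorem ae_mem_velocityBox : ∀ᵐ q ∂angularMeasure, q ∈ velocityBox :=
  (withDensity_absolutelyContinuous _ _).ae_le
    (ae_restrict_mem isCompact_velocityBox.measurableSet)

instance : IsFiniteMeasure angularMeasure :=
  isFiniteMeasure_withDensity_ofReal
    ((by fun_prop : Continuous fun q : ℝ × ℝ => cos q.1 / (4 * π)).continuousOn.integrableOn_compact
      isCompact_velocityBox).2

theorem integrable_angularMeasure {u : ℝ × ℝ → ℝ} (hu : ContinuousOn u velocityBox) :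
    Integrable u angularMeasure :=
  integrable_of_continuousOn_of_ae_mem isCompact_velocityBox ae_mem_velocityBox hu

theorem integral_angularMeasure {u : ℝ × ℝ → ℝ} (hu : ContinuousOn u velocityBox) :
    ∫ q, u q ∂angularMeasure
      = 1 / (4 * π) * ∫ ψ in (-π)..π, ∫ φ in (-(π / 2))..(π / 2), u (φ, ψ) * cos φ := by
  have hcont : ContinuousOn (fun q : ℝ × ℝ => u q * cos q.1) velocityBox :=
    hu.mul (by fun_prop)
  have hdens : Measurable fun q : ℝ × ℝ => ENNReal.ofReal (cos q.1 / (4 * π)) := by fun_prop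
  calc ∫ q, u q ∂angularMeasure
      = ∫ q in velocityBox, (ENNReal.ofReal (cos q.1 / (4 * π))).toReal • u q :=
        integral_withDensity_eq_integral_toReal_smul hdens (by simp) u
    _ = ∫ q in velocityBox, 1 / (4 * π) * (u q * cos q.1) := by
        refine setIntegral_congr_fun isCompact_velocityBox.measurableSet fun q hq => ?_
        have : 0 ≤ cos q.1 := cos_nonneg_of_mem_Icc hq.1
        simp only [ENNReal.toReal_ofReal (by positivity : 0 ≤ cos q.1 / (4 * π)), smul_eq_mul]
        ring
    _ = 1 / (4 * π) * ∫ q in velocityBox, u q * cos q.1 := integral_const_mul _ _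
    _ = 1 / (4 * π) * ∫ ψ in Icc (-π) π, ∫ φ in Icc (-(π / 2)) (π / 2), u (φ, ψ) * cos φ := by
        rw [velocityBox, Measure.volume_eq_prod, ← setIntegral_prod_swap, setIntegral_prod]
        · rfl
        · exact (hcont.integrableOn_compact isCompact_velocityBox).swap
    _ = _ := by
        simp only [integral_Icc_eq_integral_Ioc,
          intervalIntegral.integral_of_le (by linarith [pi_pos] : -π ≤ π),
          intervalIntegral.integral_of_le (by linarith [pi_pos] : -(π / 2) ≤ π / 2)]

theorem continuousOn_comp_neg_velocityBox {u : ℝ × ℝ → ℝ} (hu : ContinuousOn u velocityBox) :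
    ContinuousOn (fun q : ℝ × ℝ => u (-q.1, q.2)) velocityBox :=
  hu.comp (by fun_prop) fun _ => neg_mem_velocityBox

theorem integral_comp_neg_angularMeasure {u : ℝ × ℝ → ℝ} (hu : ContinuousOn u velocityBox) :
    ∫ q, u (-q.1, q.2) ∂angularMeasure = ∫ q, u q ∂angularMeasure := by
  rw [integral_angularMeasure (continuousOn_comp_neg_velocityBox hu),
    integral_angularMeasure hu]
  congr 2 with ψ
  simpa using intervalIntegral.integral_comp_neg (a := -(π / 2)) (b := π / 2)
    fun φ => u (φ, ψ) * cos φ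

theorem integral_angularMeasure_eq_zero {u : ℝ × ℝ → ℝ} (hu : ContinuousOn u velocityBox)
    (hodd : ∀ q ∈ velocityBox, u (-q.1, q.2) = -u q) : ∫ q, u q ∂angularMeasure = 0 := by
  have := integral_comp_neg_angularMeasure hu
  rw [integral_congr_ae (ae_mem_velocityBox.mono hodd), integral_neg] at this
  linarith

theorem integral_comp_abs_sin_angularMeasure {g : ℝ → ℝ} (hg : Continuous g) :
    ∫ q, g |sin q.1| ∂angularMeasure = ∫ x in 0..1, g x := by
  have hinner : ∫ φ in (-(π / 2))..(π / 2), g |sin φ| * cos φ = 2 * ∫ x in 0..1, g x := by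
    rw [← intervalIntegral_comp_abs zero_le_one hg]
    simpa using intervalIntegral.integral_comp_mul_deriv (a := -(π / 2)) (b := π / 2)
      (fun x _ => hasDerivAt_sin x) continuousOn_cos (hg.comp continuous_abs)
  simp only [integral_angularMeasure (u := fun q => g |sin q.1|) (by fun_prop), hinner]
  rw [intervalIntegral.integral_const, smul_eq_mul]
  field_simp
  ring

theorem integral_abs_sin_pow_angularMeasure (k : ℕ) :
    ∫ q, |sin q.1| ^ k ∂angularMeasure = 1 / (k + 1) := by
  rw [integral_comp_abs_sin_angularMeasure (g := fun x => x ^ k) (by fun_prop), integral_pow]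
  simp

theorem integral_sin_sq_angularMeasure : ∫ q, sin q.1 ^ 2 ∂angularMeasure = 1 / 3 := by
  have := integral_abs_sin_pow_angularMeasure 2
  simp only [sq_abs] at this
  rw [this]
  norm_num

instance : IsProbabilityMeasure angularMeasure :=
  isProbabilityMeasure_iff_real.2 (by simpa using integral_abs_sin_pow_angularMeasure 0)

theorem integral_cos_sq_angularMeasure : ∫ q, cos q.1 ^ 2 ∂angularMeasure = 2 / 3 := by
  simp only [cos_sq']
  rw [integral_sub (integrable_const 1) (integrable_angularMeasure (by fun_prop)),
    integral_sin_sq_angularMeasure]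
  norm_num

theorem integral_mul_cos_mul_deriv_angularMeasure {u u' : ℝ × ℝ → ℝ} {w w' : ℝ → ℝ}
    (hu : ContinuousOn u velocityBox) (hu' : ContinuousOn u' velocityBox)
    (hderiv : ∀ φ ∈ Ioo (-(π / 2)) (π / 2), ∀ ψ ∈ Icc (-π) π,
      HasDerivAt (fun t => u (t, ψ)) (u' (φ, ψ)) φ)
    (hw : ∀ φ, HasDerivAt w (w' φ) φ) (hw' : Continuous w') :
    ∫ q, w q.1 * cos q.1 * u' q ∂angularMeasure =
      ∫ q, (2 * w q.1 * sin q.1 - w' q.1 * cos q.1) * u q ∂angularMeasure := by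
  have hle : -(π / 2) ≤ π / 2 := by linarith [pi_pos]
  have hwc : Continuous w := continuous_iff_continuousAt.2 fun φ => (hw φ).continuousAt
  have hl : ContinuousOn (fun q => w q.1 * cos q.1 * u' q) velocityBox := .mul (by fun_prop) hu'
  have hr : ContinuousOn (fun q => (2 * w q.1 * sin q.1 - w' q.1 * cos q.1) * u q) velocityBox :=
    .mul (by fun_prop) hu
  have hdiff : ContinuousOn (fun q => w q.1 * cos q.1 * u' q
      - (2 * w q.1 * sin q.1 - w' q.1 * cos q.1) * u q) velocityBox := hl.sub hr
  have hinner (ψ) (hψ : ψ ∈ Icc (-π) π) : ∫ φ in (-(π / 2))..(π / 2),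
      (w φ * cos φ * u' (φ, ψ) - (2 * w φ * sin φ - w' φ * cos φ) * u (φ, ψ)) * cos φ = 0 := by
    have hslice {v : ℝ × ℝ → ℝ} (hv : ContinuousOn v velocityBox) :
        ContinuousOn (fun φ => v (φ, ψ)) (Icc (-(π / 2)) (π / 2)) :=
      hv.comp (by fun_prop) fun φ hφ => ⟨hφ, hψ⟩
    have hprim (φ) (hφ : φ ∈ Ioo (-(π / 2)) (π / 2)) :
        HasDerivAt (fun φ => w φ * cos φ ^ 2 * u (φ, ψ))
          ((w φ * cos φ * u' (φ, ψ) - (2 * w φ * sin φ - w' φ * cos φ) * u (φ, ψ)) * cos φ) φ :=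
      (((hw φ).fun_mul ((hasDerivAt_cos φ).fun_pow 2)).fun_mul
        (hderiv φ hφ ψ hψ)).congr_deriv (by ring)
    rw [intervalIntegral.integral_eq_sub_of_hasDerivAt_of_le hle
      (.mul (by fun_prop) (hslice hu)) hprim
      (((hslice hdiff).mul continuousOn_cos).intervalIntegrable_of_Icc hle)]
    simp
  rw [← sub_eq_zero, ← integral_sub (integrable_angularMeasure hl) (integrable_angularMeasure hr),
    integral_angularMeasure hdiff, mul_eq_zero]
  refine .inr (intervalIntegral.integral_zero_ae (.of_forall fun ψ hψ => hinner ψ ?_))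
  rw [uIoc_of_le (by linarith [pi_pos])] at hψ
  exact Ioc_subset_Icc_self hψ

/-! ### Transport and the maximum principle -/

theorem uniqueDiffOn_milneDomain {L : ℝ} (hL : 0 < L) : UniqueDiffOn ℝ (milneDomain L) :=
  (uniqueDiffOn_Icc hL).prod ((uniqueDiffOn_Icc (by linarith [pi_pos])).prod
    (uniqueDiffOn_Icc (by linarith [pi_pos])))

theorem isCompact_milneDomain (L : ℝ) : IsCompact (milneDomain L) :=
  isCompact_Icc.prod isCompact_velocityBox

/-- The direction `(sin φ, F cos φ, 0)` of the characteristics of the Milne problem. -/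
def characteristicField (F : ℝ → ℝ → ℝ) (p : ℝ × ℝ × ℝ) : ℝ × ℝ × ℝ :=
  (sin p.2.1, F p.1 p.2.2 * cos p.2.1, 0)

/-- The derivative `∂f/∂η`, taken within the domain so that it makes sense up to the boundary. -/
def etaDeriv (L : ℝ) (f : ℝ × ℝ × ℝ → ℝ) (p : ℝ × ℝ × ℝ) : ℝ :=
  fderivWithin ℝ f (milneDomain L) p (1, 0, 0)

/-- The derivative `∂f/∂φ`, taken within the domain so that it makes sense up to the boundary. -/
def phiDeriv (L : ℝ) (f : ℝ × ℝ × ℝ → ℝ) (p : ℝ × ℝ × ℝ) : ℝ :=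
  fderivWithin ℝ f (milneDomain L) p (0, 1, 0)

/-- The transport operator `sin φ ∂/∂η + F cos φ ∂/∂φ`, as the derivative along the
characteristics. -/
def transport (L : ℝ) (F : ℝ → ℝ → ℝ) (f : ℝ × ℝ × ℝ → ℝ) (p : ℝ × ℝ × ℝ) : ℝ :=
  fderivWithin ℝ f (milneDomain L) p (characteristicField F p)

section Transport

variable {L : ℝ} {F : ℝ → ℝ → ℝ} {f : ℝ × ℝ × ℝ → ℝ} {p : ℝ × ℝ × ℝ}

theorem transport_eq : transport L F f p =
    sin p.2.1 * etaDeriv L f p + F p.1 p.2.2 * cos p.2.1 * phiDeriv L f p := by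
  have : characteristicField F p =
      sin p.2.1 • (1, 0, 0) + (F p.1 p.2.2 * cos p.2.1) • (0, 1, 0) := by
    simp [characteristicField]
  rw [transport, this, map_add, map_smul, map_smul, smul_eq_mul, smul_eq_mul, etaDeriv, phiDeriv]

theorem transport_eq_of_hasFDerivWithinAt {f' : ℝ × ℝ × ℝ →L[ℝ] ℝ} (hL : 0 < L)
    (hp : p ∈ milneDomain L) (h : HasFDerivWithinAt f f' (milneDomain L) p) :
    transport L F f p = f' (characteristicField F p) := by
  rw [transport, h.fderivWithin (uniqueDiffOn_milneDomain hL p hp)]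

theorem transport_neg (hL : 0 < L) (hp : p ∈ milneDomain L) :
    transport L F (-f) p = -transport L F f p := by
  simp [transport, fderivWithin_neg (uniqueDiffOn_milneDomain hL p hp)]

theorem transport_sub_const (c : ℝ) : transport L F (fun p => f p - c) p = transport L F f p := by
  simp [transport, fderivWithin_sub_const]

theorem continuousOn_etaDeriv (hL : 0 < L) (hf : ContDiffOn ℝ 1 f (milneDomain L)) :
    ContinuousOn (etaDeriv L f) (milneDomain L) :=
  (hf.continuousOn_fderivWithin (uniqueDiffOn_milneDomain hL) le_rfl).clm_apply
    continuousOn_const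

theorem continuousOn_phiDeriv (hL : 0 < L) (hf : ContDiffOn ℝ 1 f (milneDomain L)) :
    ContinuousOn (phiDeriv L f) (milneDomain L) :=
  (hf.continuousOn_fderivWithin (uniqueDiffOn_milneDomain hL) le_rfl).clm_apply
    continuousOn_const

theorem hasDerivAt_etaDeriv (hf : DifferentiableOn ℝ f (milneDomain L)) {η : ℝ} {q : ℝ × ℝ}
    (hη : η ∈ Ioo 0 L) (hq : q ∈ velocityBox) :
    HasDerivAt (fun t => f (t, q)) (etaDeriv L f (η, q)) η := by
  have hslice : HasDerivWithinAt (fun t : ℝ => (t, q)) (1, 0) (Icc 0 L) η :=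
    ((hasDerivAt_id η).prodMk (hasDerivAt_const η q)).hasDerivWithinAt
  have hmaps : MapsTo (fun t : ℝ => (t, q)) (Icc 0 L) (milneDomain L) := fun t ht => ⟨ht, hq⟩
  exact ((hf (η, q) (hmaps (Ioo_subset_Icc_self hη))).hasFDerivWithinAt.comp_hasDerivWithinAt η
    hslice hmaps).hasDerivAt (Icc_mem_nhds hη.1 hη.2)

theorem hasDerivAt_phiDeriv (hf : DifferentiableOn ℝ f (milneDomain L)) {η φ ψ : ℝ}
    (hη : η ∈ Icc 0 L) (hφ : φ ∈ Ioo (-(π / 2)) (π / 2)) (hψ : ψ ∈ Icc (-π) π) :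
    HasDerivAt (fun t => f (η, t, ψ)) (phiDeriv L f (η, φ, ψ)) φ := by
  have hslice : HasDerivWithinAt (fun t : ℝ => (η, t, ψ)) (0, 1, 0) (Icc (-(π / 2)) (π / 2)) φ :=
    ((hasDerivAt_const φ η).prodMk
      ((hasDerivAt_id φ).prodMk (hasDerivAt_const φ ψ))).hasDerivWithinAt
  have hmaps : MapsTo (fun t : ℝ => (η, t, ψ)) (Icc (-(π / 2)) (π / 2)) (milneDomain L) :=
    fun t ht => ⟨hη, ht, hψ⟩
  exact ((hf (η, φ, ψ)
    (hmaps (Ioo_subset_Icc_self hφ))).hasFDerivWithinAt.comp_hasDerivWithinAt φ hslice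
      hmaps).hasDerivAt (Icc_mem_nhds hφ.1 hφ.2)

theorem neg_characteristicField_mem_posTangentConeAt (hL : 0 < L) (hp : p ∈ milneDomain L)
    (h₀ : p.1 = 0 → sin p.2.1 ≤ 0) (h₁ : p.1 = L → 0 ≤ sin p.2.1) :
    -characteristicField F p ∈ posTangentConeAt (milneDomain L) p := by
  obtain ⟨hη, hφ, hψ⟩ := hp
  have hcos (h : p.2.1 = -(π / 2) ∨ p.2.1 = π / 2) : -(F p.1 p.2.2 * cos p.2.1) = 0 := by
    rcases h with h | h <;> simp [h]
  refine mem_posTangentConeAt_of_frequently_mem (Eventually.frequently ?_)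
  filter_upwards [
    eventually_add_mul_mem_Icc hL hη (fun h => neg_nonneg.2 (h₀ h)) fun h => neg_nonpos.2 (h₁ h),
    eventually_add_mul_mem_Icc (by linarith [pi_pos]) hφ (fun h => (hcos (.inl h)).ge)
      fun h => (hcos (.inr h)).le] with t ht₁ ht₂
  exact ⟨ht₁, ht₂, by simpa [characteristicField] using hψ⟩

theorem nonneg_of_transport_add_mul_nonneg {w c : ℝ × ℝ × ℝ → ℝ} (hL : 0 < L)
    (hw : DifferentiableOn ℝ w (milneDomain L)) (hc : ∀ p ∈ milneDomain L, 0 < c p)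
    (hT : ∀ p ∈ milneDomain L, 0 ≤ transport L F w p + c p * w p)
    (hin : ∀ q ∈ inflowSet, 0 ≤ w (0, q))
    (hrefl : ∀ q ∈ velocityBox, w (L, -q.1, q.2) = w (L, q)) (hp : p ∈ milneDomain L) :
    0 ≤ w p := by
  obtain ⟨m, hm, hmin, hφ⟩ : ∃ m ∈ milneDomain L, IsMinOn w (milneDomain L) m ∧
      (m.1 = L → 0 ≤ m.2.1) := by
    obtain ⟨⟨η, φ, ψ⟩, hm, hmin⟩ :=
      (isCompact_milneDomain L).exists_isMinOn ⟨p, hp⟩ hw.continuousOn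
    by_cases h : η = L ∧ φ < 0
    · obtain ⟨rfl, hφ⟩ := h
      refine ⟨(η, -φ, ψ), ⟨hm.1, neg_mem_velocityBox hm.2⟩, fun x hx => ?_,
        fun _ => neg_nonneg.2 hφ.le⟩
      simpa only [mem_ofPred_eq, hrefl _ hm.2] using hmin hx
    · exact ⟨_, hm, hmin, fun h₁ => not_lt.1 fun h₂ => h ⟨h₁, h₂⟩⟩
  refine le_trans (not_lt.1 fun hneg => ?_) (hmin hp)
  have hsin₀ (h : m.1 = 0) : sin m.2.1 ≤ 0 :=
    not_lt.1 fun hs => hneg.not_ge (by simpa [← h] using hin m.2 ⟨hs, hm.2⟩)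
  have hsin₁ (h : m.1 = L) : 0 ≤ sin m.2.1 :=
    sin_nonneg_of_nonneg_of_le_pi (hφ h) (by linarith [hm.2.1.2, pi_pos])
  have hdir := hmin.localize.hasFDerivWithinAt_nonneg (hw m hm).hasFDerivWithinAt
    (neg_characteristicField_mem_posTangentConeAt (F := F) hL hm hsin₀ hsin₁)
  rw [map_neg] at hdir
  have := hT m hm
  rw [transport] at this
  nlinarith [hc m hm]

theorem exp_mul_le_of_supersolution {g B : ℝ × ℝ × ℝ → ℝ} {b : ℝ} (hL : 0 < L)
    (hb : b ∈ Ico 0 1) (hg : DifferentiableOn ℝ g (milneDomain L))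
    (hB : DifferentiableOn ℝ B (milneDomain L))
    (hT : ∀ p ∈ milneDomain L, exp (b * p.1) * (transport L F g p + g p)
      ≤ transport L F B p + (1 - b * sin p.2.1) * B p)
    (hin : ∀ q ∈ inflowSet, g (0, q) ≤ B (0, q))
    (hgL : ∀ q ∈ velocityBox, g (L, -q.1, q.2) = g (L, q))
    (hBL : ∀ q ∈ velocityBox, B (L, -q.1, q.2) = B (L, q)) (hp : p ∈ milneDomain L) :
    exp (b * p.1) * g p ≤ B p := by
  have hderiv (p) (hp : p ∈ milneDomain L) :=
    (hB p hp).hasFDerivWithinAt.fun_sub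
      ((hasFDerivAt_fst.const_mul b).exp.hasFDerivWithinAt.fun_mul (hg p hp).hasFDerivWithinAt)
  have htransport (p) (hp : p ∈ milneDomain L) :
      transport L F (fun p => B p - exp (b * p.1) * g p) p = transport L F B p
        - exp (b * p.1) * (transport L F g p + b * sin p.2.1 * g p) := by
    rw [transport_eq_of_hasFDerivWithinAt hL hp (hderiv p hp)]
    simp [transport, characteristicField]
    ring
  refine sub_nonneg.1 (nonneg_of_transport_add_mul_nonneg (F := F)
    (w := fun p => B p - exp (b * p.1) * g p) (c := fun p => 1 - b * sin p.2.1) hL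
    (fun p hp => (hderiv p hp).differentiableWithinAt) (fun p _ => ?_) (fun p hp => ?_)
    (fun q hq => ?_) (fun q hq => ?_) hp)
  · nlinarith [sin_le_one p.2.1, hb.1, hb.2]
  · rw [htransport p hp]
    linarith [hT p hp]
  · simpa using hin q hq
  · simp only [hgL q hq, hBL q hq]

end Transport

/-! ### Barriers -/

/-- The function `A + d sin φ (1 - η/L)`, reflection symmetric at `η = L`, against which solutions
are compared. At `η = 0` the term `d sin φ` makes it smaller than `A` on the outgoing velocities. -/
def barrier (L A d : ℝ) (p : ℝ × ℝ × ℝ) : ℝ := A + d * sin p.2.1 * (1 - p.1 / L)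

section Barrier

variable {L : ℝ} {F : ℝ → ℝ → ℝ} {A b d P : ℝ} {p : ℝ × ℝ × ℝ}

theorem differentiable_barrier : Differentiable ℝ (barrier L A d) := by
  unfold barrier
  fun_prop

theorem transport_barrier (hL : 0 < L) (hp : p ∈ milneDomain L) :
    transport L F (barrier L A d) p =
      d * (F p.1 p.2.2 * cos p.2.1 ^ 2 * (1 - p.1 / L) - sin p.2.1 ^ 2 / L) := by
  have hsin := (hasFDerivAt_snd (𝕜 := ℝ) (p := p)).fst.sin
  have hlin := ((hasFDerivAt_fst (𝕜 := ℝ) (p := p)).mul_const L⁻¹).const_sub 1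
  simp only [← div_eq_mul_inv] at hlin
  rw [transport_eq_of_hasFDerivWithinAt (f := barrier L A d) hL hp
    (((hsin.const_mul d).fun_mul hlin).const_add A).hasFDerivWithinAt]
  simp [characteristicField]
  ring

theorem barrier_le (hd : 0 ≤ d) (hp : p ∈ milneDomain L) : barrier L A d p ≤ A + d := by
  have h₁ : p.1 / L ≤ 1 := div_le_one_of_le₀ hp.1.2 (hp.1.1.trans hp.1.2)
  have h₀ : 0 ≤ p.1 / L := div_nonneg hp.1.1 (hp.1.1.trans hp.1.2)
  have : sin p.2.1 * (1 - p.1 / L) ≤ 1 :=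
    mul_le_one₀ (sin_le_one _) (by linarith) (by linarith)
  rw [barrier, mul_assoc]
  nlinarith

theorem barrier_supersolution (hL : 1 ≤ L) (hb : b ∈ Ico 0 1) (hF : |F p.1 p.2.2| ≤ 1)
    (hd : 0 ≤ d) (hdA : d ≤ A) (hP : P + 2 * d ≤ (1 - b) * A) (hp : p ∈ milneDomain L) :
    P ≤ transport L F (barrier L A d) p + (1 - b * sin p.2.1) * barrier L A d p := by
  have hL₀ : 0 < L := by linarith
  have hs₀ : 0 ≤ 1 - p.1 / L := sub_nonneg.2 (div_le_one_of_le₀ hp.1.2 hL₀.le)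
  have hs₁ : 1 - p.1 / L ≤ 1 := sub_le_self _ (div_nonneg hp.1.1 hL₀.le)
  have htransport : -d ≤ transport L F (barrier L A d) p := by
    rw [transport_barrier hL₀ hp]
    have hcos : -cos p.2.1 ^ 2 ≤ F p.1 p.2.2 * cos p.2.1 ^ 2 * (1 - p.1 / L) := by
      refine neg_le_of_abs_le ?_
      rw [abs_mul, abs_mul, abs_sq, abs_of_nonneg hs₀]
      exact (mul_le_of_le_one_right (by positivity) hs₁).trans
        (mul_le_of_le_one_left (sq_nonneg _) hF)
    have hsin : sin p.2.1 ^ 2 / L ≤ sin p.2.1 ^ 2 := div_le_self (sq_nonneg _) hL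
    nlinarith [sin_sq_add_cos_sq p.2.1]
  have hbarrier : A - d ≤ barrier L A d p := by
    have : -1 ≤ sin p.2.1 * (1 - p.1 / L) := by nlinarith [neg_one_le_sin p.2.1]
    rw [barrier, mul_assoc]
    nlinarith
  have hfactor : 1 - b ≤ 1 - b * sin p.2.1 := by nlinarith [sin_le_one p.2.1, hb.1]
  have hprod : (1 - b) * (A - d) ≤ (1 - b * sin p.2.1) * barrier L A d p :=
    mul_le_mul hfactor hbarrier (sub_nonneg.2 hdA) (by linarith [hb.2])
  nlinarith [hb.1]

theorem exp_mul_abs_le_barrier {g : ℝ × ℝ × ℝ → ℝ} (hL : 1 ≤ L) (hb : b ∈ Ico 0 1)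
    (hF : ∀ p ∈ milneDomain L, |F p.1 p.2.2| ≤ 1) (hd : 0 ≤ d) (hdA : d ≤ A)
    (hP : P + 2 * d ≤ (1 - b) * A) (hg : DifferentiableOn ℝ g (milneDomain L))
    (hT : ∀ p ∈ milneDomain L, exp (b * p.1) * |transport L F g p + g p| ≤ P)
    (hin : ∀ q ∈ inflowSet, |g (0, q)| ≤ A)
    (hgL : ∀ q ∈ velocityBox, g (L, -q.1, q.2) = g (L, q)) (hp : p ∈ milneDomain L) :
    exp (b * p.1) * |g p| ≤ barrier L A d p := by
  have hL₀ : 0 < L := by linarith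
  have hABin {q : ℝ × ℝ} (hq : q ∈ inflowSet) : A ≤ barrier L A d (0, q) := by
    have := hq.1
    simp only [barrier, zero_div, sub_zero, mul_one, le_add_iff_nonneg_right]
    positivity
  have hBL (q : ℝ × ℝ) : barrier L A d (L, -q.1, q.2) = barrier L A d (L, q) := by
    simp [barrier, hL₀.ne']
  have upper {g : ℝ × ℝ × ℝ → ℝ} (hg : DifferentiableOn ℝ g (milneDomain L))
      (hT : ∀ p ∈ milneDomain L, exp (b * p.1) * |transport L F g p + g p| ≤ P)
      (hin : ∀ q ∈ inflowSet, |g (0, q)| ≤ A)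
      (hgL : ∀ q ∈ velocityBox, g (L, -q.1, q.2) = g (L, q)) :
      exp (b * p.1) * g p ≤ barrier L A d p := by
    refine exp_mul_le_of_supersolution (F := F) hL₀ hb hg differentiable_barrier.differentiableOn
      (fun p hp => ?_) (fun q hq => ?_) hgL (fun q _ => hBL q) hp
    · exact (mul_le_mul_of_nonneg_left (le_abs_self _) (exp_nonneg _)).trans
        ((hT p hp).trans (barrier_supersolution hL hb (hF p hp) hd hdA hP hp))
    · exact (le_abs_self _).trans ((hin q hq).trans (hABin hq))
  have hneg : exp (b * p.1) * (-g) p ≤ barrier L A d p := by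
    refine upper hg.neg (fun p hp => ?_) (fun q hq => by simpa using hin q hq)
      fun q hq => congrArg Neg.neg (hgL q hq)
    rw [transport_neg hL₀ hp, Pi.neg_apply, ← neg_add, abs_neg]
    exact hT p hp
  rw [← abs_of_pos (exp_pos (b * p.1)), ← abs_mul]
  exact abs_le'.2 ⟨upper hg hT hin hgL, by simpa using hneg⟩

end Barrier

theorem le_integral_sin_sq_mul_of_le_add_reflection {v : ℝ × ℝ → ℝ}
    (hv : ContinuousOn v velocityBox) {γ d : ℝ}
    (h : ∀ q ∈ velocityBox, sin q.1 ≠ 0 → γ + d * |sin q.1| ≤ v q + v (-q.1, q.2)) :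
    γ / 6 + d / 8 ≤ ∫ q, sin q.1 ^ 2 * v q ∂angularMeasure := by
  have hcont : ContinuousOn (fun q : ℝ × ℝ => sin q.1 ^ 2 * v q) velocityBox :=
    .mul (by fun_prop) hv
  have hcont' : ContinuousOn (fun q : ℝ × ℝ => sin (-q.1) ^ 2 * v (-q.1, q.2)) velocityBox :=
    continuousOn_comp_neg_velocityBox hcont
  have hpointwise (q) (hq : q ∈ velocityBox) :
      γ * |sin q.1| ^ 2 + d * |sin q.1| ^ 3
        ≤ sin q.1 ^ 2 * v q + sin (-q.1) ^ 2 * v (-q.1, q.2) := by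
    rcases eq_or_ne (sin q.1) 0 with h₀ | h₀
    · simp [h₀]
    · have := mul_le_mul_of_nonneg_left (h q hq h₀) (sq_nonneg |sin q.1|)
      rw [sin_neg, neg_sq, ← sq_abs (sin q.1)]
      linarith
  have hpow (k : ℕ) : Integrable (fun q : ℝ × ℝ => |sin q.1| ^ k) angularMeasure :=
    integrable_angularMeasure (by fun_prop)
  have hint : ∫ q, (γ * |sin q.1| ^ 2 + d * |sin q.1| ^ 3) ∂angularMeasure
      ≤ ∫ q, (sin q.1 ^ 2 * v q + sin (-q.1) ^ 2 * v (-q.1, q.2)) ∂angularMeasure :=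
    integral_mono_ae (((hpow 2).const_mul γ).add ((hpow 3).const_mul d))
      ((integrable_angularMeasure hcont).add (integrable_angularMeasure hcont'))
      (ae_mem_velocityBox.mono hpointwise)
  rw [integral_add ((hpow 2).const_mul γ) ((hpow 3).const_mul d), integral_const_mul,
    integral_const_mul, integral_abs_sin_pow_angularMeasure, integral_abs_sin_pow_angularMeasure,
    integral_add (integrable_angularMeasure hcont) (integrable_angularMeasure hcont'),
    integral_comp_neg_angularMeasure hcont] at hint
  norm_num at hint
  linarith

theorem le_integral_sin_sq_mul_of_le_inflow_outflow {v : ℝ × ℝ → ℝ}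
    (hv : ContinuousOn v velocityBox) {α β d : ℝ}
    (hin : ∀ q ∈ velocityBox, 0 < sin q.1 → α ≤ v q)
    (hout : ∀ q ∈ velocityBox, sin q.1 < 0 → -β - d * sin q.1 ≤ v q) :
    (α - β) / 6 + d / 8 ≤ ∫ q, sin q.1 ^ 2 * v q ∂angularMeasure := by
  refine le_integral_sin_sq_mul_of_le_add_reflection hv fun q hq h => ?_
  rcases h.lt_or_gt with h | h
  · have h₁ := hout q hq h
    have h₂ := hin _ (neg_mem_velocityBox hq) (by simpa using h)
    rw [abs_of_neg h]
    linarith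
  · have h₁ := hin q hq h
    have h₂ := hout _ (neg_mem_velocityBox hq) (by simpa using h)
    simp only [sin_neg] at h₂
    rw [abs_of_pos h]
    linarith

/-! ### Moment equations -/

theorem abs_integral_angularMeasure_le {u : ℝ × ℝ → ℝ} {C : ℝ}
    (h : ∀ q ∈ velocityBox, |u q| ≤ C) : |∫ q, u q ∂angularMeasure| ≤ C := by
  simpa using norm_integral_le_of_norm_le_const (μ := angularMeasure) (f := u)
    (ae_mem_velocityBox.mono h)

/-- The source `sin φ ∂g/∂η + F cos φ ∂g/∂φ + g - ḡ` that makes `g` a solution of the Milne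
problem. -/
def milneSource (L : ℝ) (F : ℝ → ℝ → ℝ) (g : ℝ × ℝ × ℝ → ℝ) (p : ℝ × ℝ × ℝ) : ℝ :=
  transport L F g p + g p - ∫ q, g (p.1, q) ∂angularMeasure

section MomentEquation

variable {L : ℝ} {F : ℝ → ℝ → ℝ} {g : ℝ × ℝ × ℝ → ℝ} {w w' : ℝ → ℝ}

theorem continuousOn_slice {u : ℝ × ℝ × ℝ → ℝ} (hu : ContinuousOn u (milneDomain L)) {η : ℝ}
    (hη : η ∈ Icc 0 L) : ContinuousOn (fun q => u (η, q)) velocityBox :=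
  hu.comp (by fun_prop) fun _ hq => ⟨hη, hq⟩

theorem continuousOn_integral_slice {u : ℝ × ℝ × ℝ → ℝ} (hu : ContinuousOn u (milneDomain L)) :
    ContinuousOn (fun η => ∫ q, u (η, q) ∂angularMeasure) (Icc 0 L) :=
  continuousOn_integral_of_continuousOn_prod isCompact_Icc isCompact_velocityBox
    ae_mem_velocityBox hu

theorem continuousOn_transport (hL : 0 < L) (hg : ContDiffOn ℝ 1 g (milneDomain L))
    (hF : ContinuousOn (fun p : ℝ × ℝ × ℝ => F p.1 p.2.2) (milneDomain L)) :
    ContinuousOn (transport L F g) (milneDomain L) := by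
  simp only [funext fun p => transport_eq (L := L) (F := F) (f := g) (p := p)]
  exact (ContinuousOn.mul (by fun_prop) (continuousOn_etaDeriv hL hg)).add
    ((hF.mul (by fun_prop)).mul (continuousOn_phiDeriv hL hg))

theorem continuousOn_milneSource (hL : 0 < L) (hg : ContDiffOn ℝ 1 g (milneDomain L))
    (hF : ContinuousOn (fun p : ℝ × ℝ × ℝ => F p.1 p.2.2) (milneDomain L)) :
    ContinuousOn (milneSource L F g) (milneDomain L) :=
  ((continuousOn_transport hL hg hF).add hg.continuousOn).sub
    ((continuousOn_integral_slice hg.continuousOn).comp continuousOn_fst fun _ hp => hp.1)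

theorem hasDerivAt_flux (hL : 0 < L) (hg : ContDiffOn ℝ 1 g (milneDomain L))
    (hF : ContinuousOn (fun p : ℝ × ℝ × ℝ => F p.1 p.2.2) (milneDomain L))
    (hw : ∀ φ, HasDerivAt w (w' φ) φ) (hw' : Continuous w') {η : ℝ} (hη : η ∈ Ioo 0 L) :
    HasDerivAt (fun t => ∫ q, w q.1 * sin q.1 * g (t, q) ∂angularMeasure)
      ((∫ q, w q.1 * milneSource L F g (η, q) ∂angularMeasure)
        - (∫ q, w q.1 * (g (η, q) - ∫ q, g (η, q) ∂angularMeasure) ∂angularMeasure)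
        - ∫ q, (2 * w q.1 * sin q.1 - w' q.1 * cos q.1) * (F η q.2 * g (η, q)) ∂angularMeasure)
      η := by
  have hη' : η ∈ Icc 0 L := Ioo_subset_Icc_self hη
  have hwc : Continuous w := continuous_iff_continuousAt.2 fun φ => (hw φ).continuousAt
  have hwint {u : ℝ × ℝ → ℝ} (hu : ContinuousOn u velocityBox) :
      Integrable (fun q => w q.1 * u q) angularMeasure :=
    integrable_angularMeasure (.mul (by fun_prop) hu)
  have hgη := continuousOn_slice hg.continuousOn hη'
  have hFη := continuousOn_slice hF hη'
  have hgφ := continuousOn_slice (continuousOn_phiDeriv hL hg) hη'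
  have hsource := hwint (continuousOn_slice (continuousOn_milneSource hL hg hF) hη')
  have hfluc := hwint (u := fun q => g (η, q) - ∫ q, g (η, q) ∂angularMeasure)
    (hgη.sub continuousOn_const)
  have hnet : Integrable (fun q => w q.1 * milneSource L F g (η, q)
      - w q.1 * (g (η, q) - ∫ q, g (η, q) ∂angularMeasure)) angularMeasure := hsource.sub hfluc
  have hforce : Integrable (fun q => w q.1 * cos q.1 * (F η q.2 * phiDeriv L g (η, q)))
      angularMeasure := integrable_angularMeasure (.mul (by fun_prop) (hFη.mul hgφ))
  have hdiff := hasDerivAt_integral_of_continuousOn_prod (μ := angularMeasure) (s := Icc 0 L)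
    (u := fun p : ℝ × ℝ × ℝ => w p.2.1 * sin p.2.1 * g p)
    (u' := fun p => w p.2.1 * sin p.2.1 * etaDeriv L g p) isCompact_Icc isCompact_velocityBox
    ae_mem_velocityBox (.mul (by fun_prop) hg.continuousOn)
    (.mul (by fun_prop) (continuousOn_etaDeriv hL hg))
    (fun t ht q hq => (hasDerivAt_etaDeriv (hg.differentiableOn one_ne_zero)
      (interior_Icc.subset ht) hq).const_mul (w q.1 * sin q.1)) (interior_Icc.superset hη)
  have hparts := integral_mul_cos_mul_deriv_angularMeasure (hFη.mul hgη) (hFη.mul hgφ)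
    (fun φ hφ ψ hψ => (hasDerivAt_phiDeriv (hg.differentiableOn one_ne_zero) hη' hφ hψ).const_mul
      (F η ψ)) hw hw'
  refine hdiff.congr_deriv ?_
  simp only [Pi.mul_apply] at hparts
  rw [← hparts, ← integral_sub hsource hfluc, ← integral_sub hnet hforce]
  refine integral_congr_ae (.of_forall fun q => ?_)
  simp only [milneSource, transport_eq]
  ring

end MomentEquation

/-! ### Decay of the deviation -/

theorem exp_mul_le_iff_le_mul_exp_neg {x y N : ℝ} : exp x * y ≤ N ↔ y ≤ N * exp (-x) := by
  rw [exp_neg, ← div_eq_mul_inv, le_div_iff₀' (exp_pos x)]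

/-- The constant in the bound of the second moment by the source: integrating a source decaying
like `e^{-bη}` from `η = L`, once for the flux and once more for the second moment, produces the
terms `1 / b` and `1 / b ^ 2`. -/
def momentConstant (b : ℝ) : ℝ := 1 / b + 1 / b ^ 2

theorem momentConstant_pos {b : ℝ} (hb : 0 < b) : 0 < momentConstant b := by
  unfold momentConstant
  positivity

/-- `g` is the deviation `f - f_L` of a solution from its limit value: it satisfies the Milne
equation with a force of size at most `τ` and a source decaying like `M e^{-bη}`, its in-flow data
are within `M` of the constant `-a` (for `a = f_L`), and its second moment at `η = L` vanishes. -/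
structure IsMilneDeviation (L b M τ a : ℝ) (F : ℝ → ℝ → ℝ) (g : ℝ × ℝ × ℝ → ℝ) : Prop where
  one_le : 1 ≤ L
  contDiffOn : ContDiffOn ℝ 1 g (milneDomain L)
  continuousOn_force : ContinuousOn (fun p : ℝ × ℝ × ℝ => F p.1 p.2.2) (milneDomain L)
  abs_force_le : ∀ p ∈ milneDomain L, |F p.1 p.2.2| ≤ τ
  abs_source_le : ∀ p ∈ milneDomain L, |milneSource L F g p| ≤ M * exp (-(b * p.1))
  abs_inflow_add_le : ∀ q ∈ inflowSet, |g (0, q) + a| ≤ M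
  reflect : ∀ q ∈ velocityBox, g (L, -q.1, q.2) = g (L, q)
  integral_sin_sq_mul : ∫ q, sin q.1 ^ 2 * g (L, q) ∂angularMeasure = 0

namespace IsMilneDeviation

variable {L b M τ a N D : ℝ} {F : ℝ → ℝ → ℝ} {g : ℝ × ℝ × ℝ → ℝ} {w w' : ℝ → ℝ} {η : ℝ}

theorem pos (hg : IsMilneDeviation L b M τ a F g) : 0 < L := zero_lt_one.trans_le hg.one_le

theorem continuousOn_slice (hg : IsMilneDeviation L b M τ a F g) (hη : η ∈ Icc 0 L) :
    ContinuousOn (fun q => g (η, q)) velocityBox :=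
  MilneStmt.continuousOn_slice hg.contDiffOn.continuousOn hη

theorem integrable_mul (hg : IsMilneDeviation L b M τ a F g) (hw : Continuous w)
    (hη : η ∈ Icc 0 L) : Integrable (fun q => w q.1 * g (η, q)) angularMeasure :=
  integrable_angularMeasure (.mul (by fun_prop) (hg.continuousOn_slice hη))

theorem integral_mul_sub_average (hg : IsMilneDeviation L b M τ a F g) (hw : Continuous w)
    (hη : η ∈ Icc 0 L) :
    ∫ q, w q.1 * (g (η, q) - ∫ q, g (η, q) ∂angularMeasure) ∂angularMeasure
      = (∫ q, w q.1 * g (η, q) ∂angularMeasure)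
        - (∫ q, w q.1 ∂angularMeasure) * ∫ q, g (η, q) ∂angularMeasure := by
  have hwint : Integrable (fun q : ℝ × ℝ => w q.1) angularMeasure :=
    integrable_angularMeasure (by fun_prop)
  simp only [mul_sub]
  rw [integral_sub (hg.integrable_mul hw hη) (hwint.mul_const _), integral_mul_const]

theorem abs_flux_le (hg : IsMilneDeviation L b M τ a F g) (hb : 0 < b)
    (hN : ∀ p ∈ milneDomain L, |g p| ≤ N * exp (-(b * p.1)))
    (hw : ∀ φ, HasDerivAt w (w' φ) φ) (hw' : Continuous w') (hw₁ : ∀ φ, |w φ| ≤ 1)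
    (hw₂ : ∀ φ, |2 * w φ * sin φ - w' φ * cos φ| ≤ 2)
    (hD : ∀ η ∈ Icc 0 L, |∫ q, w q.1 * (g (η, q) - ∫ q, g (η, q) ∂angularMeasure) ∂angularMeasure|
      ≤ D * exp (-(b * η)))
    (hend : ∫ q, w q.1 * sin q.1 * g (L, q) ∂angularMeasure = 0) (hη : η ∈ Icc 0 L) :
    |∫ q, w q.1 * sin q.1 * g (η, q) ∂angularMeasure|
      ≤ (M + 2 * τ * N + D) / b * exp (-(b * η)) := by
  have hwc : Continuous w := continuous_iff_continuousAt.2 fun φ => (hw φ).continuousAt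
  have hbound (t) (ht : t ∈ Icc 0 L) :
      |(∫ q, w q.1 * milneSource L F g (t, q) ∂angularMeasure)
        - (∫ q, w q.1 * (g (t, q) - ∫ q, g (t, q) ∂angularMeasure) ∂angularMeasure)
        - ∫ q, (2 * w q.1 * sin q.1 - w' q.1 * cos q.1) * (F t q.2 * g (t, q)) ∂angularMeasure|
      ≤ (M + 2 * τ * N + D) * exp (-(b * t)) := by
    have hsource : |∫ q, w q.1 * milneSource L F g (t, q) ∂angularMeasure|
        ≤ 1 * (M * exp (-(b * t))) := abs_integral_angularMeasure_le fun q hq => by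
      rw [abs_mul]
      exact mul_le_mul (hw₁ _) (hg.abs_source_le _ ⟨ht, hq⟩) (abs_nonneg _) zero_le_one
    have hforce : |∫ q, (2 * w q.1 * sin q.1 - w' q.1 * cos q.1) * (F t q.2 * g (t, q))
        ∂angularMeasure| ≤ 2 * (τ * (N * exp (-(b * t)))) :=
      abs_integral_angularMeasure_le fun q hq => by
        have hτ := hg.abs_force_le (t, q) ⟨ht, hq⟩
        rw [abs_mul, abs_mul]
        exact mul_le_mul (hw₂ _) (mul_le_mul hτ (hN _ ⟨ht, hq⟩) (abs_nonneg _)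
          ((abs_nonneg _).trans hτ)) (by positivity) zero_le_two
    refine ((abs_sub _ _).trans (add_le_add_left (abs_sub _ _) _)).trans ?_
    linarith [hD t ht]
  refine abs_le_exp_of_abs_deriv_le_exp hb ?_ ?_
    (fun t ht => hasDerivAt_flux hg.pos hg.contDiffOn hg.continuousOn_force hw hw' ht)
    (fun t ht => hbound t (Ioo_subset_Icc_self ht)) hend hη
  · exact nonneg_of_mul_nonneg_left ((abs_nonneg _).trans (hbound η hη)) (exp_pos _)
  · exact continuousOn_integral_slice (u := fun p => w p.2.1 * sin p.2.1 * g p)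
      (.mul (by fun_prop) hg.contDiffOn.continuousOn)

theorem abs_integral_sin_mul_le (hg : IsMilneDeviation L b M τ a F g) (hb : 0 < b)
    (hN : ∀ p ∈ milneDomain L, |g p| ≤ N * exp (-(b * p.1))) (hη : η ∈ Icc 0 L) :
    |∫ q, sin q.1 * g (η, q) ∂angularMeasure| ≤ (M + 2 * τ * N) / b * exp (-(b * η)) := by
  have hL : L ∈ Icc 0 L := right_mem_Icc.2 hg.pos.le
  have hend : ∫ q, sin q.1 * g (L, q) ∂angularMeasure = 0 :=
    integral_angularMeasure_eq_zero (.mul (by fun_prop) (hg.continuousOn_slice hL)) fun q hq => by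
      simp [hg.reflect q hq]
  have := hg.abs_flux_le hb hN (w := fun _ => 1) (w' := fun _ => 0) (D := 0)
    (fun φ => hasDerivAt_const φ 1) continuous_const (fun _ => by simp)
    (fun φ => by simpa using abs_sin_le_one φ)
    (fun t ht => by
      rw [hg.integral_mul_sub_average (w := fun _ => 1) continuous_const ht]
      simp)
    (by simpa using hend) hη
  simpa using this

theorem abs_integral_sin_sq_mul_le (hg : IsMilneDeviation L b M τ a F g) (hb : 0 < b)
    (hN : ∀ p ∈ milneDomain L, |g p| ≤ N * exp (-(b * p.1))) (hη : η ∈ Icc 0 L) :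
    |∫ q, sin q.1 ^ 2 * g (η, q) ∂angularMeasure|
      ≤ momentConstant b * (M + 2 * τ * N) * exp (-(b * η)) := by
  have hsin : ∫ q, sin q.1 ∂angularMeasure = 0 :=
    integral_angularMeasure_eq_zero (by fun_prop) fun q _ => by simp
  have := hg.abs_flux_le hb hN (w := sin) (w' := cos) (D := (M + 2 * τ * N) / b)
    hasDerivAt_sin continuous_cos abs_sin_le_one
    (fun φ => abs_le.2 (by constructor <;> nlinarith [sin_sq_add_cos_sq φ, sq_nonneg (sin φ)]))
    (fun t ht => by
      simpa [hg.integral_mul_sub_average continuous_sin ht, hsin]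
        using hg.abs_integral_sin_mul_le hb hN ht)
    (by simpa [sq] using hg.integral_sin_sq_mul) hη
  simp only [sq, momentConstant] at this ⊢
  refine this.trans_eq ?_
  field_simp

theorem abs_average_le (hg : IsMilneDeviation L b M τ a F g) (hb : 0 < b)
    (hN : ∀ p ∈ milneDomain L, |g p| ≤ N * exp (-(b * p.1))) (hη : η ∈ Icc 0 L) :
    |∫ q, g (η, q) ∂angularMeasure|
      ≤ (2 / 3 * N + momentConstant b * (M + 2 * τ * N)) * exp (-(b * η)) := by
  have hcos : |∫ q, cos q.1 ^ 2 * g (η, q) ∂angularMeasure| ≤ 2 / 3 * (N * exp (-(b * η))) := by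
    rw [← integral_cos_sq_angularMeasure, ← integral_mul_const, ← norm_eq_abs]
    refine norm_integral_le_of_norm_le (integrable_angularMeasure (by fun_prop))
      (ae_mem_velocityBox.mono fun q hq => ?_)
    rw [norm_mul, norm_of_nonneg (sq_nonneg _)]
    exact mul_le_mul_of_nonneg_left (hN _ ⟨hη, hq⟩) (sq_nonneg _)
  have hcos_int : Integrable (fun q : ℝ × ℝ => cos q.1 ^ 2 * g (η, q)) angularMeasure :=
    hg.integrable_mul (w := fun φ => cos φ ^ 2) (by fun_prop) hη
  have hsin_int : Integrable (fun q : ℝ × ℝ => sin q.1 ^ 2 * g (η, q)) angularMeasure :=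
    hg.integrable_mul (w := fun φ => sin φ ^ 2) (by fun_prop) hη
  have hsplit : ∫ q, g (η, q) ∂angularMeasure
      = (∫ q, cos q.1 ^ 2 * g (η, q) ∂angularMeasure)
        + ∫ q, sin q.1 ^ 2 * g (η, q) ∂angularMeasure := by
    rw [← integral_add hcos_int hsin_int]
    simp only [← add_mul, cos_sq_add_sin_sq, one_mul]
  rw [hsplit, add_mul, mul_assoc (2 / 3)]
  exact (abs_add_le _ _).trans (add_le_add hcos (hg.abs_integral_sin_sq_mul_le hb hN hη))

theorem nonneg (hg : IsMilneDeviation L b M τ a F g) : 0 ≤ M := by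
  have h₀ : ((0 : ℝ), (0 : ℝ), (0 : ℝ)) ∈ milneDomain L :=
    ⟨⟨le_rfl, hg.pos.le⟩, ⟨by linarith [pi_pos], by linarith [pi_pos]⟩,
      by linarith [pi_pos], pi_pos.le⟩
  exact nonneg_of_mul_nonneg_left ((abs_nonneg _).trans (hg.abs_source_le _ h₀)) (exp_pos _)

theorem neg (hg : IsMilneDeviation L b M τ a F g) : IsMilneDeviation L b M τ (-a) F (-g) where
  one_le := hg.one_le
  contDiffOn := hg.contDiffOn.neg
  continuousOn_force := hg.continuousOn_force
  abs_force_le := hg.abs_force_le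
  abs_source_le p hp := by
    have : milneSource L F (-g) p = -milneSource L F g p := by
      simp only [milneSource, transport_neg hg.pos hp, Pi.neg_apply, integral_neg]
      ring
    rw [this, abs_neg]
    exact hg.abs_source_le p hp
  abs_inflow_add_le q hq := by
    rw [Pi.neg_apply, ← neg_add, abs_neg]
    exact hg.abs_inflow_add_le q hq
  reflect q hq := congrArg Neg.neg (hg.reflect q hq)
  integral_sin_sq_mul := by simp [integral_neg, hg.integral_sin_sq_mul]

theorem exp_mul_abs_le_barrier (hg : IsMilneDeviation L b M τ a F g) (ha : 0 ≤ a) {A : ℝ}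
    (hb : b ∈ Ioc 0 (1 / 20)) (hτ : 2 * momentConstant b * τ ≤ 1 / 640) (hτ₁ : τ ≤ 1)
    (hN₀ : 0 ≤ N) (hN : ∀ p ∈ milneDomain L, exp (b * p.1) * |g p| ≤ N)
    (haA : a + M ≤ A) (hA : 4 / 5 * N + 2 * (momentConstant b + 1) * M ≤ A)
    {p : ℝ × ℝ × ℝ} (hp : p ∈ milneDomain L) :
    exp (b * p.1) * |g p| ≤ barrier L A (N / 40) p := by
  have hκM : 0 ≤ momentConstant b * M := mul_nonneg (momentConstant_pos hb.1).le hg.nonneg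
  refine MilneStmt.exp_mul_abs_le_barrier (F := F)
    (P := 2 / 3 * N + momentConstant b * (M + 2 * τ * N) + M)
    hg.one_le ⟨hb.1.le, by linarith [hb.2]⟩ (fun p hp => (hg.abs_force_le p hp).trans hτ₁)
    (by positivity) (by linarith [hg.nonneg]) ?_ (hg.contDiffOn.differentiableOn one_ne_zero)
    (fun p hp => ?_) (fun q hq => ?_) hg.reflect hp
  · have := mul_le_mul_of_nonneg_right hτ hN₀
    have := mul_le_mul_of_nonneg_right hb.2 (show 0 ≤ A by linarith [hg.nonneg])
    linarith [hg.nonneg]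
  · have hsource : transport L F g p + g p
        = milneSource L F g p + ∫ q, g (p.1, q) ∂angularMeasure := by
      rw [milneSource]
      ring
    rw [exp_mul_le_iff_le_mul_exp_neg, hsource, add_comm _ M, add_mul]
    exact (abs_add_le _ _).trans (add_le_add (hg.abs_source_le p hp)
      (hg.abs_average_le hb.1 (fun p hp => exp_mul_le_iff_le_mul_exp_neg.1 (hN p hp)) hp.1))
  · have := abs_le.1 (hg.abs_inflow_add_le q hq)
    exact abs_le.2 ⟨by linarith, by linarith⟩

-- At `η = 0` a velocity and its reflection contribute `-g ≥ a - M` and `-g ≥ -(a + M) + d |sin φ|`: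
-- the possibly large constant `a` cancels, and the second moment of `-g` retains the slope `d`.
theorem le_of_exp_mul_abs_le_barrier (hg : IsMilneDeviation L b M τ a F g) (hb : 0 < b)
    (hN : ∀ p ∈ milneDomain L, exp (b * p.1) * |g p| ≤ N) {d : ℝ}
    (hd : ∀ p ∈ milneDomain L, exp (b * p.1) * |g p| ≤ barrier L (a + M) d p) :
    d / 8 ≤ momentConstant b * (M + 2 * τ * N) + M / 3 := by
  have h₀ : (0 : ℝ) ∈ Icc 0 L := left_mem_Icc.2 hg.pos.le
  have hmoment := hg.abs_integral_sin_sq_mul_le hb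
    (fun p hp => exp_mul_le_iff_le_mul_exp_neg.1 (hN p hp)) h₀
  have hhalf : ((a - M) - (a + M)) / 6 + d / 8
      ≤ ∫ q, sin q.1 ^ 2 * -g (0, q) ∂angularMeasure := by
    refine le_integral_sin_sq_mul_of_le_inflow_outflow
      (v := fun q => -g (0, q)) (hg.continuousOn_slice h₀).neg (fun q hq h => ?_) (fun q hq _ => ?_)
    · linarith [(abs_le.1 (hg.abs_inflow_add_le q ⟨h, hq⟩)).2]
    · have := hd (0, q) ⟨h₀, hq⟩
      simp only [mul_zero, exp_zero, one_mul, barrier, zero_div, sub_zero, mul_one] at this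
      linarith [le_abs_self (g (0, q))]
  simp only [mul_neg, integral_neg, mul_zero, neg_zero, exp_zero, mul_one] at hhalf hmoment
  linarith [(abs_le.1 hmoment).1]

theorem exp_mul_abs_le (hg : IsMilneDeviation L b M τ a F g) (hb : b ∈ Ioc 0 (1 / 20))
    (hτ : 2 * momentConstant b * τ ≤ 1 / 640) (hτ₁ : τ ≤ 1) {p : ℝ × ℝ × ℝ}
    (hp : p ∈ milneDomain L) : exp (b * p.1) * |g p| ≤ 640 * (momentConstant b + 1) * M := by
  wlog ha : 0 ≤ a generalizing a g
  · simpa using this hg.neg (by linarith)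
  obtain ⟨m, hm, hmax⟩ := (isCompact_milneDomain L).exists_isMaxOn ⟨p, hp⟩
    (ContinuousOn.mul (f := fun p : ℝ × ℝ × ℝ => exp (b * p.1)) (by fun_prop)
      hg.contDiffOn.continuousOn.abs)
  set N := exp (b * m.1) * |g m|
  have hN (p) (hp : p ∈ milneDomain L) : exp (b * p.1) * |g p| ≤ N := hmax hp
  have hN₀ : 0 ≤ N := by positivity
  have hM := hg.nonneg
  have hκM : 0 ≤ momentConstant b * M := mul_nonneg (momentConstant_pos hb.1).le hM
  have hbarrier {A : ℝ} (haA : a + M ≤ A) (hA : 4 / 5 * N + 2 * (momentConstant b + 1) * M ≤ A)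
      (p) (hp : p ∈ milneDomain L) : exp (b * p.1) * |g p| ≤ barrier L A (N / 40) p :=
    hg.exp_mul_abs_le_barrier ha hb hτ hτ₁ hN₀ hN haA hA hp
  refine (hN p hp).trans ?_
  -- If `N` dominates `a` then the barrier is a contraction `N ≤ (4 / 5 + 1 / 40) N + O(M)`;
  -- otherwise the barrier has base `a + M`, and its slope `N / 40` is `O(M)` by the second moment.
  rcases le_total (a + M) (4 / 5 * N + 2 * (momentConstant b + 1) * M) with h | h
  · have : N ≤ 4 / 5 * N + 2 * (momentConstant b + 1) * M + N / 40 :=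
      (hbarrier h le_rfl m hm).trans (barrier_le (by positivity) hm)
    linarith
  · have := hg.le_of_exp_mul_abs_le_barrier hb.1 hN (hbarrier le_rfl h)
    have := mul_le_mul_of_nonneg_right hτ hN₀
    linarith

end IsMilneDeviation

/-! ### Solutions of the Milne problem -/

section Solution

variable {R₁ R₂ ε n b M τ L : ℝ} {h : ℝ → ℝ → ℝ} {F : ℝ → ℝ → ℝ} {S f : ℝ × ℝ × ℝ → ℝ}
  {p : ℝ × ℝ × ℝ}

theorem interior_milneDomain : interior (milneDomain L) =
    Ioo 0 L ×ˢ Ioo (-(π / 2)) (π / 2) ×ˢ Ioo (-π) π := by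
  simp only [milneDomain, interior_prod_eq, interior_Icc]

theorem closure_interior_milneDomain (hL : 0 < L) :
    closure (interior (milneDomain L)) = milneDomain L := by
  have hπ := pi_pos
  rw [interior_milneDomain, closure_prod_eq, closure_prod_eq, closure_Ioo hL.ne,
    closure_Ioo (by linarith), closure_Ioo (by linarith), milneDomain]

theorem dEta_eq_etaDeriv (hf : DifferentiableOn ℝ f (milneDomain L))
    (hp : p ∈ interior (milneDomain L)) : dEta f p = etaDeriv L f p :=
  (hasDerivAt_etaDeriv hf (interior_milneDomain.subset hp).1 (interior_subset hp).2).deriv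

theorem dPhi_eq_phiDeriv (hf : DifferentiableOn ℝ f (milneDomain L))
    (hp : p ∈ interior (milneDomain L)) : dPhi f p = phiDeriv L f p :=
  (hasDerivAt_phiDeriv hf (interior_subset hp).1 (interior_milneDomain.subset hp).2.1
    (interior_subset hp).2.2).deriv

theorem angAvg_eq_integral (hf : ContinuousOn f (milneDomain L)) {η : ℝ} (hη : η ∈ Icc 0 L) :
    angAvg f η = ∫ q, f (η, q) ∂angularMeasure :=
  (integral_angularMeasure (continuousOn_slice hf hη)).symm

theorem integral_sin_sq_mul_sub_limitValue (hL : 0 ≤ L) (hf : ContinuousOn f (milneDomain L)) :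
    ∫ q, sin q.1 ^ 2 * (f (L, q) - limitValue L f) ∂angularMeasure = 0 := by
  have hcont : ContinuousOn (fun q : ℝ × ℝ => f (L, q) * sin q.1 ^ 2) velocityBox :=
    (continuousOn_slice hf (right_mem_Icc.2 hL)).mul (by fun_prop)
  have hlimit : limitValue L f = 3 * ∫ q, f (L, q) * sin q.1 ^ 2 ∂angularMeasure := by
    rw [integral_angularMeasure hcont, limitValue]
    ring
  simp only [mul_comm (sin _ ^ 2), sub_mul]
  rw [integral_sub (integrable_angularMeasure hcont) (integrable_angularMeasure (by fun_prop)),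
    integral_const_mul, integral_sin_sq_angularMeasure, hlimit]
  ring

theorem milneSource_sub_const (hf : ContinuousOn f (milneDomain L)) (hp : p ∈ milneDomain L)
    (c : ℝ) : milneSource L F (fun p => f p - c) p = milneSource L F f p := by
  simp only [milneSource, transport_sub_const]
  rw [integral_sub (integrable_angularMeasure (continuousOn_slice hf hp.1)) (integrable_const c)]
  simp
  ring

theorem IsMilneSolution.milneSource_eq (hf : IsMilneSolution R₁ R₂ ε n h S f)
    (hp : p ∈ interior (milneDomain (layerL ε n))) :
    milneSource (layerL ε n) (force R₁ R₂ ε) f p = S p := by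
  have hdiff := hf.smooth.differentiableOn one_ne_zero
  rw [milneSource, transport_eq, ← hf.eqn p hp, dEta_eq_etaDeriv hdiff hp,
    dPhi_eq_phiDeriv hdiff hp, angAvg_eq_integral hf.smooth.continuousOn (interior_subset hp).1]

theorem IsMilneSolution.isMilneDeviation (hf : IsMilneSolution R₁ R₂ ε n h S f)
    (hL : 1 ≤ layerL ε n)
    (hFc : ContinuousOn (fun p : ℝ × ℝ × ℝ => force R₁ R₂ ε p.1 p.2.2) (milneDomain (layerL ε n)))
    (hF : ∀ p ∈ milneDomain (layerL ε n), |force R₁ R₂ ε p.1 p.2.2| ≤ τ)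
    (hh : ∀ q ∈ inflowSet, |h q.1 q.2| ≤ M)
    (hS : ∀ p ∈ interior (milneDomain (layerL ε n)), exp (b * p.1) * |S p| ≤ M) :
    IsMilneDeviation (layerL ε n) b M τ (limitValue (layerL ε n) f) (force R₁ R₂ ε)
      (fun p => f p - limitValue (layerL ε n) f) where
  one_le := hL
  contDiffOn := hf.smooth.sub contDiffOn_const
  continuousOn_force := hFc
  abs_force_le := hF
  abs_source_le p hp := by
    have hL₀ : 0 < layerL ε n := by linarith
    have hsource := continuousOn_milneSource hL₀ hf.smooth hFc
    rw [milneSource_sub_const hf.smooth.continuousOn hp]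
    rw [← closure_interior_milneDomain hL₀] at hp hsource
    refine le_on_closure (g := fun p => M * exp (-(b * p.1))) (fun p hp => ?_) hsource.abs
      (by fun_prop) hp
    rw [hf.milneSource_eq hp]
    exact exp_mul_le_iff_le_mul_exp_neg.1 (hS p hp)
  abs_inflow_add_le q hq := by
    rw [sub_add_cancel, hf.inflow q hq]
    exact hh q hq
  reflect q _ := by rw [← hf.reflect]
  integral_sin_sq_mul :=
    integral_sin_sq_mul_sub_limitValue (by linarith) hf.smooth.continuousOn

end Solution

/-! ### The force and the norms -/

section Force

variable {R₁ R₂ ε n τ r L : ℝ}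

theorem abs_force_le {η ψ : ℝ} (hε : 0 ≤ ε) (hr : 0 < r) (h₁ : r ≤ R₁ - ε * η)
    (h₂ : r ≤ R₂ - ε * η) : |force R₁ R₂ ε η ψ| ≤ ε / r := by
  have hR₁ : 0 < R₁ - ε * η := hr.trans_le h₁
  have hR₂ : 0 < R₂ - ε * η := hr.trans_le h₂
  rw [force, neg_mul, abs_neg, abs_of_nonneg (by positivity)]
  calc ε * (sin ψ ^ 2 / (R₁ - ε * η) + cos ψ ^ 2 / (R₂ - ε * η))
      ≤ ε * (sin ψ ^ 2 / r + cos ψ ^ 2 / r) := by gcongr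
    _ = ε / r := by rw [← add_div, sin_sq_add_cos_sq, mul_one_div]

theorem continuousOn_force (h₁ : ∀ η ∈ Icc 0 L, R₁ - ε * η ≠ 0)
    (h₂ : ∀ η ∈ Icc 0 L, R₂ - ε * η ≠ 0) :
    ContinuousOn (fun p : ℝ × ℝ × ℝ => force R₁ R₂ ε p.1 p.2.2) (milneDomain L) := by
  unfold force
  exact continuousOn_const.mul
    ((ContinuousOn.div (by fun_prop) (by fun_prop) fun p hp => h₁ _ hp.1).add
      (ContinuousOn.div (by fun_prop) (by fun_prop) fun p hp => h₂ _ hp.1))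

theorem tendsto_mul_layerL (hn : n < 1) :
    Tendsto (fun ε => ε * layerL ε n) (𝓝[>] 0) (𝓝 0) := by
  have hrpow : Tendsto (fun ε : ℝ => ε ^ (1 - n)) (𝓝[>] 0) (𝓝 0) := by
    have := (continuousAt_rpow_const 0 (1 - n) (.inr (by linarith))).tendsto
    rw [zero_rpow (by linarith)] at this
    exact this.mono_left nhdsWithin_le_nhds
  refine hrpow.congr' (eventually_mem_nhdsWithin.mono fun ε hε => ?_)
  rw [sub_eq_add_neg, rpow_add hε, rpow_one]
  rfl

theorem exists_forall_abs_force_le (hR₁ : 0 < R₁) (hR₂ : 0 < R₂) (hn : n ∈ Ico 0 1) (hτ : 0 < τ) :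
    ∃ ε₀ ∈ Ioo (0 : ℝ) 1, ∀ ε ∈ Ioc 0 ε₀, 1 ≤ layerL ε n ∧
      ContinuousOn (fun p : ℝ × ℝ × ℝ => force R₁ R₂ ε p.1 p.2.2) (milneDomain (layerL ε n)) ∧
      ∀ p ∈ milneDomain (layerL ε n), |force R₁ R₂ ε p.1 p.2.2| ≤ τ := by
  obtain ⟨r, hr, hr₁, hr₂⟩ : ∃ r > 0, 2 * r ≤ R₁ ∧ 2 * r ≤ R₂ :=
    ⟨min R₁ R₂ / 2, half_pos (lt_min hR₁ hR₂), by
      simpa only [mul_div_cancel₀ _ (two_ne_zero' ℝ)] using le_min_iff.1 le_rfl⟩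
  have hε : Tendsto (fun ε : ℝ => ε) (𝓝[>] 0) (𝓝 0) := tendsto_id.mono_left nhdsWithin_le_nhds
  obtain ⟨δ, hδ, hsub⟩ := mem_nhdsGT_iff_exists_Ioc_subset.1
    (((tendsto_mul_layerL hn.2).eventually_le_const hr).and
      (hε.eventually_le_const (mul_pos hτ hr)))
  refine ⟨min δ (1 / 2), ⟨lt_min hδ one_half_pos, (min_le_right _ _).trans_lt one_half_lt_one⟩,
    fun ε hε => ?_⟩
  obtain ⟨hεL, hετ⟩ := hsub ⟨hε.1, hε.2.trans (min_le_left _ _)⟩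
  have hmargin {R η : ℝ} (hR : 2 * r ≤ R) (hη : η ∈ Icc 0 (layerL ε n)) : r ≤ R - ε * η := by
    linarith [mul_le_mul_of_nonneg_left hη.2 hε.1.le]
  refine ⟨?_, ?_, fun p hp => ?_⟩
  · have : ε ≤ 1 / 2 := hε.2.trans (min_le_right _ _)
    exact one_le_rpow_of_pos_of_le_one_of_nonpos hε.1 (by linarith) (neg_nonpos.2 hn.1)
  · exact continuousOn_force (fun η hη => (hr.trans_le (hmargin hr₁ hη)).ne')
      fun η hη => (hr.trans_le (hmargin hr₂ hη)).ne'
  · exact (abs_force_le hε.1.le hr (hmargin hr₁ hp.1) (hmargin hr₂ hp.1)).trans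
      ((div_le_iff₀ hr).2 hετ)

end Force

section Norms

variable {L B c : ℝ} {g : ℝ × ℝ × ℝ → ℝ}

theorem linfNorm_le (hB : 0 ≤ B) (hg : ∀ p ∈ milneDomain L, |g p| ≤ B) : linfNorm L g ≤ B :=
  Real.iSup_le (fun p => Real.iSup_le (hg p) hB) hB

theorem intervalIntegral_exp_neg_mul_le (hc : 0 < c) : ∫ x in 0..L, exp (-c * x) ≤ 1 / c := by
  rw [intervalIntegral.integral_comp_mul_left (f := exp) (neg_ne_zero.2 hc.ne'), integral_exp,
    mul_zero, exp_zero, smul_eq_mul, inv_neg, neg_mul, ← mul_neg, neg_sub, one_div]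
  exact mul_le_of_le_one_right (inv_nonneg.2 hc.le) (sub_le_self _ (exp_nonneg _))

theorem l2Norm_le (hL : 0 ≤ L) (hgc : ContinuousOn g (milneDomain L)) (hB : 0 ≤ B) (hc : 0 < c)
    (hg : ∀ p ∈ milneDomain L, |g p| ≤ B * exp (-(c * p.1))) :
    l2Norm L g ≤ B * √(2 * π / c) := by
  have hslice (η) (hη : η ∈ Icc 0 L) :
      ‖∫ ψ in (-π)..π, ∫ φ in (-(π / 2))..(π / 2), g (η, φ, ψ) ^ 2 * cos φ‖
        ≤ 4 * π * B ^ 2 * exp (-(2 * c) * η) := by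
    have hmeasure := integral_angularMeasure (u := fun q => g (η, q) ^ 2)
      ((continuousOn_slice hgc hη).pow 2)
    have hbound : |∫ q, g (η, q) ^ 2 ∂angularMeasure| ≤ (B * exp (-(c * η))) ^ 2 :=
      abs_integral_angularMeasure_le fun q hq => by
        rw [abs_pow]
        exact pow_le_pow_left₀ (abs_nonneg _) (hg (η, q) ⟨hη, hq⟩) 2
    have hexp : exp (-(c * η)) ^ 2 = exp (-(2 * c) * η) := by
      rw [← exp_nat_mul]
      ring_nf
    rw [hmeasure, mul_pow, hexp, abs_mul, abs_of_pos (by positivity), one_div_mul_eq_div,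
      div_le_iff₀' (by positivity), ← mul_assoc] at hbound
    exact hbound
  refine sqrt_le_iff.2 ⟨by positivity, ?_⟩
  calc _ ≤ ∫ η in 0..L, 4 * π * B ^ 2 * exp (-(2 * c) * η) := by
        refine (le_norm_self _).trans (intervalIntegral.norm_integral_le_of_norm_le hL
          (.of_forall fun η hη => hslice η (Ioc_subset_Icc_self hη)) ?_)
        exact Continuous.intervalIntegrable (by fun_prop) _ _
    _ ≤ 4 * π * B ^ 2 * (1 / (2 * c)) := by
        rw [intervalIntegral.integral_const_mul]
        gcongr
        exact intervalIntegral_exp_neg_mul_le (by positivity)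
    _ = (B * √(2 * π / c)) ^ 2 := by
        rw [mul_pow, sq_sqrt (by positivity)]
        field_simp
        ring

theorem l2Norm_add_linfNorm_exp_mul_le (hL : 0 ≤ L) (hgc : ContinuousOn g (milneDomain L))
    (hB : 0 ≤ B) (hc : 0 < c) (hg : ∀ p ∈ milneDomain L, exp (2 * c * p.1) * |g p| ≤ B) :
    l2Norm L (fun p => exp (c * p.1) * g p) + linfNorm L (fun p => exp (c * p.1) * g p)
      ≤ B * (√(2 * π / c) + 1) := by
  have hdecay (p) (hp : p ∈ milneDomain L) :
      |exp (c * p.1) * g p| ≤ B * exp (-(c * p.1)) := by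
    rw [← exp_mul_le_iff_le_mul_exp_neg, abs_mul, abs_exp, ← mul_assoc, ← exp_add, ← add_mul,
      ← two_mul]
    exact hg p hp
  rw [mul_add, mul_one]
  refine add_le_add (l2Norm_le hL (.mul (by fun_prop) hgc) hB hc hdecay)
    (linfNorm_le hB fun p hp => (hdecay p hp).trans (mul_le_of_le_one_right hB ?_))
  exact exp_le_one_iff.2 (neg_nonpos.2 (mul_nonneg hc.le hp.1.1))

end Norms

theorem milne_exponential_decay_general (R₁ R₂ n K : ℝ) (hR₁ : 0 < R₁) (hR₂ : 0 < R₂)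
    (hn : n ∈ Ico (0 : ℝ) 1) (hK : 0 < K) :
    ∃ ε₀ ∈ Ioo (0 : ℝ) 1, ∃ K₀ ∈ Ioc (0 : ℝ) K, ∃ C > (0 : ℝ),
      ∀ ε ∈ Ioc (0 : ℝ) ε₀, ∀ M : ℝ, ∀ h : ℝ → ℝ → ℝ, ∀ S f : ℝ × ℝ × ℝ → ℝ,
        (∀ q ∈ inflowSet, |h q.1 q.2| ≤ M) →
        (∀ p ∈ interior (milneDomain (layerL ε n)), exp (K * p.1) * |S p| ≤ M) →
        IsMilneSolution R₁ R₂ ε n h S f →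
        l2Norm (layerL ε n) (fun p => exp (K₀ * p.1) * (f p - limitValue (layerL ε n) f))
          + linfNorm (layerL ε n) (fun p => exp (K₀ * p.1) * (f p - limitValue (layerL ε n) f))
          ≤ C * M := by
  obtain ⟨c, hc, hc₁, hcK⟩ : ∃ c > 0, 2 * c ≤ 1 / 20 ∧ 2 * c ≤ K :=
    ⟨min (1 / 20) K / 2, by positivity, by
      simpa only [mul_div_cancel₀ _ (two_ne_zero' ℝ)] using le_min_iff.1 le_rfl⟩
  have hκ : 0 < momentConstant (2 * c) := momentConstant_pos (by positivity)
  obtain ⟨τ, hτ, hτ₁, hκτ⟩ : ∃ τ > 0, τ ≤ 1 ∧ 2 * momentConstant (2 * c) * τ ≤ 1 / 640 :=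
    ⟨min 1 (1 / 640 / (2 * momentConstant (2 * c))), by positivity, min_le_left _ _,
      (le_div_iff₀' (by positivity)).1 (min_le_right _ _)⟩
  obtain ⟨ε₀, hε₀, hforce⟩ := exists_forall_abs_force_le hR₁ hR₂ hn hτ
  refine ⟨ε₀, hε₀, c, ⟨hc, by linarith⟩,
    640 * (momentConstant (2 * c) + 1) * (√(2 * π / c) + 1), by positivity,
    fun ε hε M h S f hh hS hf => ?_⟩
  obtain ⟨hL, hFc, hFτ⟩ := hforce ε hε
  have hdev := hf.isMilneDeviation (b := 2 * c) hL hFc hFτ hh fun p hp =>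
    (mul_le_mul_of_nonneg_right (exp_le_exp.2 (mul_le_mul_of_nonneg_right hcK
      (interior_subset hp).1.1)) (abs_nonneg _)).trans (hS p hp)
  rw [mul_right_comm]
  exact l2Norm_add_linfNorm_exp_mul_le hdev.pos.le hdev.contDiffOn.continuousOn
    (mul_nonneg (by positivity) hdev.nonneg) hc
    fun p hp => hdev.exp_mul_abs_le ⟨by positivity, hc₁⟩ hκτ hτ₁ hp

theorem DataBounds.abs_inflow_le {K M L : ℝ} {h : ℝ → ℝ → ℝ} {S : ℝ × ℝ × ℝ → ℝ}
    (hd : DataBounds K M L h S) {q : ℝ × ℝ} (hq : q ∈ inflowSet) : |h q.1 q.2| ≤ M :=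
  (le_add_of_nonneg_right (abs_nonneg _)).trans
    ((le_add_of_nonneg_right (abs_nonneg _)).trans (hd.hBound q hq))

theorem DataBounds.exp_mul_abs_source_le {K M L : ℝ} {h : ℝ → ℝ → ℝ} {S : ℝ × ℝ × ℝ → ℝ}
    (hd : DataBounds K M L h S) {p : ℝ × ℝ × ℝ} (hp : p ∈ milneDomain L) :
    exp (K * p.1) * |S p| ≤ M := by
  refine (mul_le_mul_of_nonneg_left ?_ (exp_nonneg _)).trans (hd.sBound p hp)
  linarith [abs_nonneg (dEta S p), abs_nonneg (dPhi S p), abs_nonneg (dPsi S p)]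

/-- Theorem "Milne theorem 2": exponential spatial decay. -/
theorem milne_exponential_decay (R₁ R₂ n K M : ℝ) (hR₁ : 0 < R₁) (hR₂ : 0 < R₂)
    (hn : n ∈ Ioo (0 : ℝ) (1 / 2)) (hK : 0 < K) (hM : 0 < M) :
    ∃ ε₀ ∈ Ioo (0 : ℝ) 1, ∃ K₀ ∈ Ioc (0 : ℝ) K, ∃ C > (0 : ℝ),
      ∀ ε ∈ Ioc (0 : ℝ) ε₀, ∀ h : ℝ → ℝ → ℝ, ∀ S f : ℝ × ℝ × ℝ → ℝ,
        DataBounds K M (layerL ε n) h S → IsMilneSolution R₁ R₂ ε n h S f →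
        l2Norm (layerL ε n)
            (fun p => Real.exp (K₀ * p.1) * (f p - limitValue (layerL ε n) f))
          + linfNorm (layerL ε n)
              (fun p => Real.exp (K₀ * p.1) * (f p - limitValue (layerL ε n) f)) ≤ C := by
  obtain ⟨ε₀, hε₀, K₀, hK₀, C, hC, hdecay⟩ :=
    milne_exponential_decay_general R₁ R₂ n K hR₁ hR₂ ⟨hn.1.le, by linarith [hn.2]⟩ hK
  exact ⟨ε₀, hε₀, K₀, hK₀, C * M, mul_pos hC hM, fun ε hε h S f hd hf =>
    hdecay ε hε M h S f (fun _ => hd.abs_inflow_le)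
      (fun _ hp => hd.exp_mul_abs_source_le (interior_subset hp)) hf⟩

end MilneStmt
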